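/- arXiv:1411.5282 — 9 statements merged into one kernel-verified Lean document; each statement's English description precedes it below -/
import Mathlib

section
/- For every n ≥ 4 there exists a directed graph G on n vertices with a self-loop at every vertex such that: (i) G satisfies Condition NC with parameters f = 1 and l = 1; (ii) every vertex i has exactly 4 in-neighbors including itself, i.e., |N_i^−| = 4; and (iii) G has exactly 4n directed edges, counting the self-loops. -/
/-- `p` is a directed path (a nonempty list of distinct vertices, with consecutive vertices
joined by edges of `E`) from some vertex of `W` to `x`, with at most `l` edges. -/
def IsWxPath {V : Type} (E : V → V → Prop) (l : ℕ) (W : Finset V) (x : V)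
    (p : List V) : Prop :=
  p.Chain' E ∧ p.Nodup ∧ (∃ w ∈ W, p.head? = some w) ∧ p.getLast? = some x ∧
    p.length ≤ l + 1

/-- `S` is an `l`-restricted `(W,x)`-vertex cut for the edge relation `E`:
`x ∉ S` and every `(W,x)`-path of length at most `l` contains a vertex of `S`. -/
def IsCut {V : Type} (E : V → V → Prop) (l : ℕ) (W : Finset V) (x : V)
    (S : Finset V) : Prop :=
  x ∉ S ∧ ∀ p : List V, IsWxPath E l W x p → ∃ s ∈ S, s ∈ p

/-- `A ⇒_l B`: there is `i ∈ B` with `κ_l(A, i) ≥ f + 1`, i.e. every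
`l`-restricted `(A,i)`-vertex cut has at least `f + 1` vertices. -/
def ArrowL {V : Type} (E : V → V → Prop) (f l : ℕ) (A B : Finset V) : Prop :=
  ∃ i ∈ B, ∀ S : Finset V, IsCut E l A i S → f + 1 ≤ S.card

/-- Edge relation of the subgraph induced on the complement of `F`. -/
def inducedE {V : Type} (E : V → V → Prop) (F : Finset V) : V → V → Prop :=
  fun u v => u ∉ F ∧ v ∉ F ∧ E u v

/-- `L, C, R, F` form a partition of the vertex set into four pairwise disjoint sets. -/
def IsPartition4 {V : Type} [Fintype V] [DecidableEq V] (L C R F : Finset V) : Prop :=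
  L ∪ C ∪ R ∪ F = Finset.univ ∧ Disjoint L C ∧ Disjoint L R ∧ Disjoint L F ∧
    Disjoint C R ∧ Disjoint C F ∧ Disjoint R F

/-- Condition NC for parameters `f` and `l`: for every partition `L, C, R, F` of the
vertex set with `L, R` nonempty and `|F| ≤ f`, in the induced subgraph `G_F` either
`R ∪ C ⇒_l L` or `L ∪ C ⇒_l R`. -/
def CondNC {V : Type} [Fintype V] [DecidableEq V] (E : V → V → Prop) (f l : ℕ) : Prop :=
  ∀ L C R F : Finset V, IsPartition4 L C R F → L.Nonempty → R.Nonempty → F.card ≤ f →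
    ArrowL (inducedE E F) f l (R ∪ C) L ∨ ArrowL (inducedE E F) f l (L ∪ C) R

lemma arrow_of {V : Type} (E : V → V → Prop) (F A B : Finset V) (i a b : V)
    (hi : i ∈ B) (ha : a ∈ A) (hb : b ∈ A) (hab : a ≠ b) (hai : a ≠ i) (hbi : b ≠ i)
    (hiF : i ∉ F) (haF : a ∉ F) (hbF : b ∉ F) (ea : E a i) (eb : E b i) :
    ArrowL (inducedE E F) 1 1 A B := by
  classical
  refine ⟨i, hi, fun S hS => ?_⟩
  have key : ∀ c, c ∈ A → c ≠ i → c ∉ F → E c i → c ∈ S := by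
    intro c hc hci hcF ec
    obtain ⟨s, hs, hsp⟩ := hS.2 [c, i]
      ⟨List.isChain_pair.2 ⟨hcF, hiF, ec⟩, by simpa using hci, ⟨c, hc, rfl⟩, rfl, by simp⟩
    have hxs := hS.1
    simp only [List.mem_cons, List.not_mem_nil, or_false] at hsp
    rcases hsp with h | h
    · exact h ▸ hs
    · exact absurd (h ▸ hs) hxs
  exact Finset.one_lt_card.2 ⟨a, key a ha hai haF ea, b, key b hb hbi hbF eb, hab⟩

/-- Labels of the four core vertices: 0 for L, 1 for R, 2 for C, 3 for F. -/
lemma label_fact (w : Fin 4 → Fin 4) (hF : ∀ a b, w a = 3 → w b = 3 → a = b)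
    (h0 : ∃ a, w a = 0) (h1 : ∃ a, w a = 1) :
    (∃ i a b, a ≠ b ∧ w i = 0 ∧ (w a = 1 ∨ w a = 2) ∧ (w b = 1 ∨ w b = 2)) ∨
    (∃ i a b, a ≠ b ∧ w i = 1 ∧ (w a = 0 ∨ w a = 2) ∧ (w b = 0 ∨ w b = 2)) := by
  revert w
  set_option maxRecDepth 100000 in
  set_option synthInstance.maxHeartbeats 1000000 in
  set_option synthInstance.maxSize 10000 in
  decide

def Gr (n : ℕ) (u v : Fin n) : Bool := decide (u.val < 3 ∨ u.val = max 3 v.val)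

lemma Gr_core {n : ℕ} (hn : 4 ≤ n) (a b : Fin 4) :
    Gr n (Fin.castLE hn a) (Fin.castLE hn b) = true := by
  simp only [Gr, Fin.val_castLE, decide_eq_true_eq]; omega

/-- If `L` misses the core, then any vertex of `L` hears two core vertices. -/
lemma leaf_case {n : ℕ} (hn : 4 ≤ n) (L A F : Finset (Fin n)) (hL : L.Nonempty)
    (hLF : Disjoint L F) (hcov : ∀ x, x ∈ L ∨ x ∈ A ∨ x ∈ F) (hF : F.card ≤ 1)
    (h : ∀ a : Fin 4, Fin.castLE hn a ∉ L) :
    ArrowL (inducedE (fun u v => Gr n u v = true) F) 1 1 A L := by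
  obtain ⟨v, hv⟩ := hL
  have hF' := Finset.card_le_one.1 hF
  obtain ⟨a, b, hab, ha3, hb3, ha, hb⟩ : ∃ a b : Fin 4, a ≠ b ∧ a.val < 3 ∧ b.val < 3 ∧
      Fin.castLE hn a ∉ F ∧ Fin.castLE hn b ∉ F := by
    have hne : ∀ a b : Fin 4, a ≠ b → Fin.castLE hn a ∈ F → Fin.castLE hn b ∉ F :=
      fun a b hab ha hb => hab (Fin.castLE_injective hn (hF' _ ha _ hb))
    by_cases h0 : Fin.castLE hn 0 ∈ F
    · exact ⟨1, 2, by decide, by decide, by decide, hne 0 1 (by decide) h0,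
        hne 0 2 (by decide) h0⟩
    · by_cases h1 : Fin.castLE hn 1 ∈ F
      · exact ⟨0, 2, by decide, by decide, by decide, h0, hne 1 2 (by decide) h1⟩
      · exact ⟨0, 1, by decide, by decide, by decide, h0, h1⟩
  have hA : ∀ c : Fin 4, Fin.castLE hn c ∉ F → Fin.castLE hn c ∈ A := by
    intro c hc
    rcases hcov (Fin.castLE hn c) with h' | h' | h'
    · exact absurd h' (h c)
    · exact h'
    · exact absurd h' hc
  refine arrow_of _ F A L v _ _ hv (hA a ha) (hA b hb)
    (fun e => hab (Fin.castLE_injective hn e)) (fun e => h a (e ▸ hv)) (fun e => h b (e ▸ hv))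
    (Finset.disjoint_left.1 hLF hv) ha hb ?_ ?_
  · simp [Gr, ha3]
  · simp [Gr, hb3]

lemma Gr_NC {n : ℕ} (hn : 4 ≤ n) : CondNC (fun u v => Gr n u v = true) 1 1 := by
  intro L C R F ⟨hU, hLC, hLR, hLF, hCR, hCF, hRF⟩ hL hR hF
  have hcov : ∀ x, x ∈ L ∨ x ∈ C ∨ x ∈ R ∨ x ∈ F := by
    intro x
    have : x ∈ L ∪ C ∪ R ∪ F := hU ▸ Finset.mem_univ x
    simpa [or_assoc] using this
  by_cases h0 : ∀ a : Fin 4, Fin.castLE hn a ∉ L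
  · left
    refine leaf_case hn L _ F hL hLF (fun x => ?_) hF h0
    have := hcov x
    simp only [Finset.mem_union]; tauto
  by_cases h1 : ∀ a : Fin 4, Fin.castLE hn a ∉ R
  · right
    refine leaf_case hn R _ F hR hRF (fun x => ?_) hF h1
    have := hcov x
    simp only [Finset.mem_union]; tauto
  push Not at h0 h1
  rw [Finset.disjoint_left] at hLC hLR hLF hCR hCF hRF
  let w : Fin 4 → Fin 4 := fun a => if Fin.castLE hn a ∈ L then 0 else
    if Fin.castLE hn a ∈ R then 1 else if Fin.castLE hn a ∈ C then 2 else 3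
  have w0 : ∀ a, w a = 0 ↔ Fin.castLE hn a ∈ L := by
    intro a; simp only [w]; split_ifs <;> simp_all
  have w1 : ∀ a, w a = 1 ↔ Fin.castLE hn a ∈ R := by
    intro a; have := @hLR (Fin.castLE hn a); simp only [w]; split_ifs <;> simp_all
  have w2 : ∀ a, w a = 2 ↔ Fin.castLE hn a ∈ C := by
    intro a
    have := @hLC (Fin.castLE hn a)
    simp only [w]; split_ifs <;> simp_all
    exact fun h => hCR h ‹_›
  have w3 : ∀ a, w a = 3 → Fin.castLE hn a ∈ F := by
    intro a
    have := hcov (Fin.castLE hn a)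
    simp only [w]; split_ifs <;> simp_all
  have inj := Fin.castLE_injective hn
  have hw := label_fact w
    (fun a b ha hb => inj (Finset.card_le_one.1 hF _ (w3 a ha) _ (w3 b hb)))
    (by simpa only [w0] using h0) (by simpa only [w1] using h1)
  simp only [w0, w1, w2] at hw
  rcases hw with ⟨i, a, b, hab, hi, ha, hb⟩ | ⟨i, a, b, hab, hi, ha, hb⟩
  · left
    have q : ∀ c : Fin 4, (Fin.castLE hn c ∈ R ∨ Fin.castLE hn c ∈ C) →
        Fin.castLE hn c ≠ Fin.castLE hn i ∧ Fin.castLE hn c ∉ F := by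
      intro c hc
      constructor
      · intro e; rw [e] at hc; exact hc.elim (hLR hi) (hLC hi)
      · exact hc.elim (fun h => hRF h) (fun h => hCF h)
    exact arrow_of _ F _ L _ _ _ hi (Finset.mem_union.2 ha) (Finset.mem_union.2 hb)
      (fun e => hab (inj e)) (q a ha).1 (q b hb).1 (hLF hi) (q a ha).2 (q b hb).2
      (Gr_core hn a i) (Gr_core hn b i)
  · right
    have q : ∀ c : Fin 4, (Fin.castLE hn c ∈ L ∨ Fin.castLE hn c ∈ C) →
        Fin.castLE hn c ≠ Fin.castLE hn i ∧ Fin.castLE hn c ∉ F := by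
      intro c hc
      constructor
      · intro e; rw [e] at hc; exact hc.elim (fun h => hLR h hi) (fun h => hCR h hi)
      · exact hc.elim (fun h => hLF h) (fun h => hCF h)
    exact arrow_of _ F _ R _ _ _ hi (Finset.mem_union.2 ha) (Finset.mem_union.2 hb)
      (fun e => hab (inj e)) (q a ha).1 (q b hb).1 (hRF hi) (q a ha).2 (q b hb).2
      (Gr_core hn a i) (Gr_core hn b i)

lemma Gr_card {n : ℕ} (hn : 4 ≤ n) (i : Fin n) :
    (Finset.univ.filter (fun u => Gr n u i = true)).card = 4 := by
  have : Finset.univ.filter (fun u => Gr n u i = true) =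
      {⟨0, by omega⟩, ⟨1, by omega⟩, ⟨2, by omega⟩, ⟨max 3 i.val, by omega⟩} := by
    ext u
    simp only [Gr, decide_eq_true_eq, Finset.mem_filter, Finset.mem_univ, true_and,
      Finset.mem_insert, Finset.mem_singleton, Fin.ext_iff]
    omega
  rw [this]
  have h3 := le_max_left 3 i.val
  rw [Finset.card_insert_of_notMem, Finset.card_insert_of_notMem, Finset.card_insert_of_notMem,
    Finset.card_singleton] <;>
  · simp only [Finset.mem_insert, Finset.mem_singleton, Fin.ext_iff]
    omega

/-- For every `n ≥ 4` there is a directed graph on `n` vertices, with a self-loop at every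
vertex, satisfying Condition NC with `f = 1` and `l = 1`, in which every vertex has exactly
`4` in-neighbors (including itself) and which has exactly `4n` directed edges. -/
theorem stmt_2 (n : ℕ) (hn : 4 ≤ n) :
    ∃ E : Fin n → Fin n → Bool,
      (∀ v, E v v = true) ∧
      CondNC (fun u v => E u v = true) 1 1 ∧
      (∀ i : Fin n, (Finset.univ.filter (fun u => E u i = true)).card = 4) ∧
      (Finset.univ.filter (fun p : Fin n × Fin n => E p.1 p.2 = true)).card = 4 * n := by
  refine ⟨Gr n, ?_, Gr_NC hn, Gr_card hn, ?_⟩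
  · intro v
    simp only [Gr, decide_eq_true_eq]
    omega
  · have h := Finset.card_eq_sum_card_fiberwise (f := Prod.snd)
      (s := Finset.univ.filter (fun p : Fin n × Fin n => Gr n p.1 p.2 = true))
      (t := Finset.univ) (fun _ _ => by simp)
    rw [h, Finset.sum_congr rfl (g := fun _ => 4)]
    · simp [mul_comm]
    · intro i _
      rw [← Gr_card hn i]
      refine Finset.card_bij (fun p _ => p.1) ?_ ?_ ?_
      · rintro ⟨a, b⟩ h
        simp only [Finset.mem_filter, Finset.mem_univ, true_and] at h ⊢
        rw [← h.2]; exact h.1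
      · rintro ⟨a, b⟩ h ⟨c, d⟩ h' e
        simp only [Finset.mem_filter, Finset.mem_univ, true_and] at h h' e
        rw [e, h.2, h'.2]
      · intro a ha
        exact ⟨(a, i), by simpa using ha, rfl⟩
end

section
/- G satisfies Condition NC for parameters f and l if and only if for every F ⊆ V with |F| ≤ f and every choice of sets C_i ⊆ N_i^{l−} \ {i} with |C_i| ≤ f for each i ∈ V \ F, the associated reduced graph contains exactly one source component. -/
/-- There is a directed path (nonempty list of distinct vertices) of length at most `l`
from `u` to `i` in `E` all of whose vertices avoid the set `Avoid`. -/
def HasPathLe {V : Type} (E : V → V → Prop) (l : ℕ) (Avoid : Finset V) (u i : V) : Prop :=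
  ∃ p : List V, p.Chain' E ∧ p.Nodup ∧ p.head? = some u ∧ p.getLast? = some i ∧
    p.length ≤ l + 1 ∧ ∀ v ∈ p, v ∉ Avoid

/-- Edge relation of the reduced graph associated with `F` and the choice `C`:
an edge `(u, i)` (both outside `F`) whenever there is a directed path of length at most `l`
from `u` to `i` in `G` whose vertices avoid `F ∪ C i`. -/
def reducedEdge {V : Type} [DecidableEq V] (E : V → V → Prop) (l : ℕ) (F : Finset V)
    (C : V → Finset V) : V → V → Prop :=
  fun u i => u ∉ F ∧ i ∉ F ∧ HasPathLe E l (F ∪ C i) u i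

/-- The choice `C` is admissible for `F`: for each `i ∉ F`, `C i ⊆ N_i^{l-} \ {i}`
and `|C i| ≤ f`. -/
def AdmissibleC {V : Type} (E : V → V → Prop) (l f : ℕ) (F : Finset V)
    (C : V → Finset V) : Prop :=
  ∀ i, i ∉ F → (C i).card ≤ f ∧ ∀ u ∈ C i, u ≠ i ∧ HasPathLe E l ∅ u i

/-- `K` is a source component of the directed graph with vertex set `VS` and edge relation
`Rel`: a strongly connected component no vertex outside of which has a directed path to it. -/
def IsSourceComponent {V : Type} (Rel : V → V → Prop) (VS : Finset V) (K : Finset V) : Prop :=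
  K.Nonempty ∧ K ⊆ VS ∧
    (∀ u ∈ K, ∀ v ∈ K, Relation.ReflTransGen Rel u v) ∧
    (∀ v ∈ VS, v ∉ K → ∀ u ∈ K, ¬ Relation.ReflTransGen Rel v u)

theorem aux_exists_source {V : Type} [Fintype V] [DecidableEq V] (Rel : V → V → Prop)
    (VS : Finset V) (v : V) (hv : v ∈ VS) :
    ∃ K : Finset V, IsSourceComponent Rel VS K ∧ ∀ u ∈ K, Relation.ReflTransGen Rel u v := by
  classical
  let anc : V → Finset V := fun u => VS.filter (fun w => Relation.ReflTransGen Rel w u)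
  have hne : (anc v).Nonempty := ⟨v, by simp [anc, hv, Relation.ReflTransGen.refl]⟩
  obtain ⟨u, hu, hmin⟩ := Finset.exists_min_image (anc v) (fun u => (anc u).card) hne
  have hu' : u ∈ VS ∧ Relation.ReflTransGen Rel u v := by simpa [anc] using hu
  have key : ∀ w ∈ anc u, Relation.ReflTransGen Rel u w := by
    intro w hw
    have hw' : w ∈ VS ∧ Relation.ReflTransGen Rel w u := by simpa [anc] using hw
    have hsub : anc w ⊆ anc u := by
      intro z hz
      have hz' : z ∈ VS ∧ Relation.ReflTransGen Rel z w := by simpa [anc] using hz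
      simpa [anc] using And.intro hz'.1 (hz'.2.trans hw'.2)
    have hwv : w ∈ anc v := by
      simpa [anc] using And.intro hw'.1 (hw'.2.trans hu'.2)
    have heq := Finset.eq_of_subset_of_card_le hsub (hmin w hwv)
    have : u ∈ anc w := by
      rw [heq]; simp [anc, hu'.1, Relation.ReflTransGen.refl]
    have h2 : u ∈ VS ∧ Relation.ReflTransGen Rel u w := by simpa [anc] using this
    exact h2.2
  refine ⟨anc u, ⟨⟨u, by simp [anc, hu'.1, Relation.ReflTransGen.refl]⟩,
    Finset.filter_subset _ _, ?_, ?_⟩, ?_⟩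
  · intro a ha b hb
    have ha' : a ∈ VS ∧ Relation.ReflTransGen Rel a u := by simpa [anc] using ha
    exact ha'.2.trans (key b hb)
  · intro a ha hna b hb hab
    have hb' : b ∈ VS ∧ Relation.ReflTransGen Rel b u := by simpa [anc] using hb
    exact hna (by simpa [anc] using And.intro ha (hab.trans hb'.2))
  · intro a ha
    have ha' : a ∈ VS ∧ Relation.ReflTransGen Rel a u := by simpa [anc] using ha
    exact ha'.2.trans hu'.2

theorem aux_source_subset {V : Type} (Rel : V → V → Prop) (VS K K' : Finset V)
    (h : IsSourceComponent Rel VS K) (h' : IsSourceComponent Rel VS K') (u : V)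
    (hu : u ∈ K) (hu' : u ∈ K') : K ⊆ K' := by
  intro v hv
  by_contra hn
  exact h'.2.2.2 v (h.2.1 hv) hn u hu' (h.2.2.1 v hv u hu)

theorem aux_avoid {V : Type} (E : V → V → Prop) (F : Finset V) (p : List V) (w : V)
    (hc : p.IsChain (inducedE E F)) (hh : p.head? = some w) (hw : w ∉ F) :
    ∀ v ∈ p, v ∉ F := by
  induction p generalizing w with
  | nil => simp
  | cons a t ih =>
    have haw : a = w := by simpa using hh
    subst haw
    intro v hv
    rcases List.mem_cons.1 hv with rfl | hv
    · exact hw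
    · cases t with
      | nil => simp at hv
      | cons b t =>
        rw [List.isChain_cons_cons] at hc
        exact ih b hc.2 rfl hc.1.2.1 v hv

theorem aux_induced {V : Type} (E : V → V → Prop) (F : Finset V) (p : List V)
    (hc : p.IsChain E) (hh : ∀ v ∈ p, v ∉ F) : p.IsChain (inducedE E F) := by
  induction p with
  | nil => simp
  | cons a t ih =>
    cases t with
    | nil => simp
    | cons b t =>
      rw [List.isChain_cons_cons] at hc ⊢
      exact ⟨⟨hh a (by simp), hh b (by simp), hc.1⟩,
        ih hc.2 (fun v hv => hh v (List.mem_cons_of_mem _ hv))⟩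

theorem aux_suffix {V : Type} (E : V → V → Prop) (l : ℕ) (p : List V) (i s : V)
    (hc : p.IsChain E) (hnd : p.Nodup) (hlast : p.getLast? = some i)
    (hlen : p.length ≤ l + 1) (hs : s ∈ p) : HasPathLe E l ∅ s i := by
  obtain ⟨a, b, rfl⟩ := List.append_of_mem hs
  refine ⟨s :: b, hc.right_of_append, hnd.of_append_right, rfl, ?_, ?_, by simp⟩
  · rw [List.getLast?_append] at hlast
    cases h : (s :: b).getLast? with
    | none => simp at h
    | some y => simpa [h] using hlast
  · simp at hlen ⊢; omega

/-- Under NC there is no source component closed on both sides. -/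
theorem aux_edge {V : Type} [DecidableEq V] (E : V → V → Prop) (f l : ℕ)
    (F A B : Finset V) (C : V → Finset V) (hC : AdmissibleC E l f F C)
    (hA : ∀ a ∈ A, a ∉ F) (hB : ∀ b ∈ B, b ∉ F)
    (h : ArrowL (inducedE E F) f l A B) : ∃ a ∈ A, ∃ i ∈ B, reducedEdge E l F C a i := by
  obtain ⟨i, hi, hcut⟩ := h
  have hCi := hC i (hB i hi)
  have hnc : ¬ IsCut (inducedE E F) l A i (C i) := by
    intro h
    have := hcut _ h
    omega
  have hiC : i ∉ C i := fun h => (hCi.2 i h).1 rfl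
  unfold IsCut at hnc
  push Not at hnc
  obtain ⟨p, ⟨hc, hnd, ⟨w, hw, hhead⟩, hlast, hlen⟩, hp⟩ := hnc hiC
  refine ⟨w, hw, i, hi, hA w hw, hB i hi, p, ?_, hnd, hhead, hlast, hlen, ?_⟩
  · exact List.IsChain.imp (fun a b h => h.2.2) hc
  · intro v hv hv'
    rcases Finset.mem_union.1 hv' with h | h
    · exact aux_avoid E F p w hc hhead (hA w hw) v hv h
    · exact hp v h hv

theorem aux_noarrow {V : Type} [DecidableEq V] (E : V → V → Prop) (f l : ℕ)
    (F A B : Finset V) (h : ¬ ArrowL (inducedE E F) f l A B) :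
    ∀ i ∈ B, ∃ D : Finset V, (D.card ≤ f ∧ ∀ u ∈ D, u ≠ i ∧ HasPathLe E l ∅ u i) ∧
      ∀ a ∈ A, ¬ HasPathLe E l (F ∪ D) a i := by
  classical
  intro i hi
  unfold ArrowL at h
  push Not at h
  obtain ⟨S, ⟨hiS, hS⟩, hcard⟩ := h i hi
  refine ⟨S.filter (fun u => HasPathLe E l ∅ u i), ⟨?_, ?_⟩, ?_⟩
  · have := Finset.card_filter_le S (fun u => HasPathLe E l ∅ u i)
    omega
  · intro u hu
    rw [Finset.mem_filter] at hu
    exact ⟨fun h => hiS (h ▸ hu.1), hu.2⟩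
  · rintro a ha ⟨p, hc, hnd, hhead, hlast, hlen, hav⟩
    obtain ⟨s, hs, hsp⟩ := hS p ⟨aux_induced E F p hc
      (fun v hv hF => hav v hv (Finset.mem_union_left _ hF)), hnd, ⟨a, ha, hhead⟩, hlast, hlen⟩
    exact hav s hsp (Finset.mem_union_right _ (Finset.mem_filter.2
      ⟨hs, aux_suffix E l p i s hc hnd hlast hlen hsp⟩))

theorem aux_closed {V : Type} (Rel : V → V → Prop) (L : Finset V)
    (h : ∀ u i, i ∈ L → Rel u i → u ∈ L) (u v : V) (huv : Relation.ReflTransGen Rel u v)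
    (hv : v ∈ L) : u ∈ L := by
  induction huv using Relation.ReflTransGen.head_induction_on with
  | refl => exact hv
  | head hab _ ih => exact h _ _ ih hab

theorem aux_card {V : Type} [Fintype V] [DecidableEq V] (E : V → V → Prop) (f l : ℕ)
    (A B : Finset V) (hAB : Disjoint A B) (h : ArrowL (inducedE E ∅) f l A B) :
    f + 1 < Fintype.card V := by
  obtain ⟨i, hi, hcut⟩ := h
  have h1 := hcut (Finset.univ.erase i) ⟨by simp, by
    rintro p ⟨_, _, ⟨w, hw, hhead⟩, _, _⟩
    refine ⟨w, ?_, List.mem_of_mem_head? hhead⟩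
    simp only [Finset.mem_erase, Finset.mem_univ, and_true]
    rintro rfl
    exact (Finset.disjoint_left.1 hAB hw) hi⟩
  have h2 := Finset.card_erase_of_mem (Finset.mem_univ i)
  rw [Finset.card_univ] at h2
  have h3 : 0 < Fintype.card V := Fintype.card_pos_iff.2 ⟨i⟩
  omega

/-- `G` satisfies Condition NC iff for every `F` with `|F| ≤ f` and every admissible choice
of the sets `C_i`, the associated reduced graph contains exactly one source component. -/
theorem stmt_3 {V : Type} [Fintype V] [DecidableEq V] (E : V → V → Prop)
    (hself : ∀ v, E v v) (hn : 2 ≤ Fintype.card V) (f l : ℕ) (hl : 1 ≤ l) :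
    CondNC E f l ↔
      ∀ F : Finset V, F.card ≤ f → ∀ C : V → Finset V, AdmissibleC E l f F C →
        ∃! K : Finset V,
          IsSourceComponent (reducedEdge E l F C) (Finset.univ \ F) K := by
  classical
  constructor
  · intro hNC F hF C hC
    have hcard : f + 1 < Fintype.card V := by
      obtain ⟨a, b, hab⟩ := Fintype.exists_pair_of_one_lt_card (by omega : 1 < Fintype.card V)
      have hpart : IsPartition4 ({a} : Finset V) ∅ (Finset.univ \ {a}) ∅ := by
        refine ⟨by simp, by simp, ?_, by simp, by simp, by simp, by simp⟩
        exact Finset.disjoint_sdiff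
      have hd : Disjoint ({a} : Finset V) (Finset.univ \ {a}) := Finset.disjoint_sdiff
      rcases hNC _ _ _ _ hpart ⟨a, by simp⟩ ⟨b, by simpa using hab.symm⟩ (by simp) with h | h
      · exact aux_card E f l _ _ (by simpa using hd.symm) h
      · exact aux_card E f l _ _ (by simpa using hd) h
    have hv : ∃ v, v ∉ F := by
      by_contra hcon
      push Not at hcon
      have : F = Finset.univ := Finset.eq_univ_iff_forall.2 hcon
      rw [this, Finset.card_univ] at hF
      omega
    obtain ⟨v, hv⟩ := hv
    obtain ⟨K, hK, _⟩ := aux_exists_source (reducedEdge E l F C) (Finset.univ \ F) v (by simpa)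
    refine ⟨K, hK, ?_⟩
    intro K' hK'
    by_contra hne
    have hdis : Disjoint K K' := by
      rw [Finset.disjoint_left]
      intro u hu hu'
      exact hne ((aux_source_subset _ _ _ _ hK' hK u hu' hu).antisymm
        (aux_source_subset _ _ _ _ hK hK' u hu hu'))
    have hKF : ∀ u ∈ K, u ∉ F := fun u hu => by simpa using hK.2.1 hu
    have hKF' : ∀ u ∈ K', u ∉ F := fun u hu => by simpa using hK'.2.1 hu
    have hd1 : ∀ u ∈ K, u ∉ K' := fun u hu => Finset.disjoint_left.1 hdis hu
    have hpart : IsPartition4 K (Finset.univ \ (K ∪ K' ∪ F)) K' F := by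
      refine ⟨?_, ?_, hdis, Finset.disjoint_left.2 hKF, ?_, ?_, Finset.disjoint_left.2 hKF'⟩
      · ext x; simp; tauto
      all_goals rw [Finset.disjoint_left]; intro x; simp; try tauto
    rcases hNC _ _ _ _ hpart hK.1 hK'.1 hF with h | h
    · obtain ⟨a, ha, i, hi, he⟩ := aux_edge E f l F _ _ C hC
        (by intro a ha; simp at ha; rcases ha with h | h; exacts [hKF' a h, h.2.2]) hKF h
      refine hK.2.2.2 a (by simpa using he.1) ?_ i hi (Relation.ReflTransGen.single he)
      intro haK
      have := hd1 a haK
      simp at ha; tauto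
    · obtain ⟨a, ha, i, hi, he⟩ := aux_edge E f l F _ _ C hC
        (by intro a ha; simp at ha; rcases ha with h | h; exacts [hKF a h, h.2.2]) hKF' h
      refine hK'.2.2.2 a (by simpa using he.1) ?_ i hi (Relation.ReflTransGen.single he)
      intro haK
      have := hd1 a
      simp at ha; tauto
  · intro hU L C R F hpart hL hR hF
    by_contra hcon
    push Not at hcon
    obtain ⟨hun, hLC, hLR, hLF, hCR, hCF, hRF⟩ := hpart
    have h1 := aux_noarrow E f l F _ _ hcon.1
    have h2 := aux_noarrow E f l F _ _ hcon.2
    choose! D1 hD1 hD1' using h1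
    choose! D2 hD2 hD2' using h2
    have hLR' : ∀ i ∈ R, i ∉ L := fun i hi hi' => Finset.disjoint_left.1 hLR hi' hi
    let D : V → Finset V := fun i => if i ∈ L then D1 i else if i ∈ R then D2 i else ∅
    have hadm : AdmissibleC E l f F D := by
      intro i hi
      by_cases hiL : i ∈ L
      · simpa only [D, hiL, if_true] using hD1 i hiL
      · by_cases hiR : i ∈ R
        · simpa only [D, hiL, hiR, if_true, if_false] using hD2 i hiR
        · simp [D, hiL, hiR]
    have hcov : ∀ x, x ∈ L ∨ x ∈ C ∨ x ∈ R ∨ x ∈ F := by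
      intro x
      have : x ∈ L ∪ C ∪ R ∪ F := by rw [hun]; simp
      simp at this; tauto
    have hcl : ∀ u i, i ∈ L → reducedEdge E l F D u i → u ∈ L := by
      rintro u i hi ⟨huF, hiF, hp⟩
      by_contra hu
      have hx := hcov u
      refine hD1' i hi u (by simp; tauto) ?_
      simpa only [D, hi, if_true] using hp
    have hcr : ∀ u i, i ∈ R → reducedEdge E l F D u i → u ∈ R := by
      rintro u i hi ⟨huF, hiF, hp⟩
      by_contra hu
      have hx := hcov u
      refine hD2' i hi u (by simp; tauto) ?_
      simpa only [D, hi, hLR' i hi, if_true, if_false] using hp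
    obtain ⟨a, ha⟩ := hL
    obtain ⟨b, hb⟩ := hR
    obtain ⟨K1, hK1, hK1a⟩ := aux_exists_source (reducedEdge E l F D) (Finset.univ \ F) a
      (by simpa using Finset.disjoint_left.1 hLF ha)
    obtain ⟨K2, hK2, hK2b⟩ := aux_exists_source (reducedEdge E l F D) (Finset.univ \ F) b
      (by simpa using Finset.disjoint_left.1 hRF hb)
    have heq : K1 = K2 := (hU F hF D hadm).unique hK1 hK2
    obtain ⟨u, hu⟩ := hK1.1
    exact hLR' u (aux_closed _ R hcr u b (hK2b u (heq ▸ hu)) hb)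
      (aux_closed _ L hcl u a (hK1a u hu) ha)
end

section
/- Suppose f ≥ 1 and G satisfies Condition NC for parameters f and l. Then for every vertex i ∈ V and every F ⊆ V \ {i} with |F| ≤ f, in the induced subgraph G_F every l-restricted ((V \ F) \ {i}, i)-vertex cut has size at least f+1; that is, κ_l((V \ F) \ {i}, i) ≥ f+1 computed in G_F. -/
/-- Suppose `f ≥ 1` and `G` satisfies Condition NC. Then for every vertex `i` and every
`F ⊆ V \ {i}` with `|F| ≤ f`, in the induced subgraph `G_F` every `l`-restricted
`((V \ F) \ {i}, i)`-vertex cut has size at least `f + 1`. -/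
theorem stmt_7 {V : Type} [Fintype V] [DecidableEq V] (E : V → V → Prop)
    (hself : ∀ v, E v v) (hn : 2 ≤ Fintype.card V) (f l : ℕ) (hl : 1 ≤ l)
    (hf : 1 ≤ f) (hNC : CondNC E f l) :
    ∀ i : V, ∀ F : Finset V, i ∉ F → F.card ≤ f →
      ∀ S : Finset V,
        IsCut (inducedE E F) l ((Finset.univ \ F).erase i) i S → f + 1 ≤ S.card := by
  intro i F hiF hF S hS
  have part : ∀ F' : Finset V, i ∉ F' →
      IsPartition4 {i} ∅ ((Finset.univ \ F').erase i) F' := by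
    intro F' h
    refine ⟨?_, ?_, ?_, ?_, ?_, ?_, ?_⟩
    · ext v
      by_cases hv : v = i <;> by_cases hv' : v ∈ F' <;> simp [hv, hv']
    · simp
    · simp
    · simpa using h
    · simp
    · simp
    · rw [Finset.disjoint_left]
      intro v hv
      simp at hv
      exact hv.2
  have second : ∀ F' : Finset V,
      ¬ ArrowL (inducedE E F') f l ({i} ∪ ∅) ((Finset.univ \ F').erase i) := by
    rintro F' ⟨j, hj, h⟩
    have hji : j ≠ i := Finset.ne_of_mem_erase hj
    have := h {i} ⟨by simpa using hji, by
      rintro p ⟨-, -, ⟨w, hw, hp⟩, -, -⟩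
      have hw' : w = i := by simpa using hw
      subst hw'
      exact ⟨w, by simp, List.mem_of_mem_head? (by simp [hp])⟩⟩
    simp at this
    omega
  by_cases hR : ((Finset.univ \ F).erase i).Nonempty
  · rcases hNC {i} ∅ _ F (part F hiF) (by simp) hR hF with h | h
    · obtain ⟨j, hj, h⟩ := h
      have hj' : j = i := by simpa using hj
      subst hj'
      exact h S (by simpa using hS)
    · exact absurd h (second F)
  · exfalso
    have hsub : ((Finset.univ \ (∅ : Finset V)).erase i) ⊆ F := by
      intro v hv
      by_contra hvF
      exact hR ⟨v, by simp at hv; simp [hv, hvF]⟩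
    have hne : ((Finset.univ \ (∅ : Finset V)).erase i).Nonempty := by
      rw [← Finset.card_pos, Finset.card_erase_of_mem (by simp)]
      simp
      omega
    rcases hNC {i} ∅ _ ∅ (part ∅ (by simp)) (by simp) hne (by simp) with h | h
    · obtain ⟨j, hj, h⟩ := h
      have hj' : j = i := by simpa using hj
      subst hj'
      have h1 := h ((Finset.univ \ (∅ : Finset V)).erase j) ⟨by simp, by
        rintro p ⟨-, -, ⟨w, hw, hp⟩, -, -⟩
        exact ⟨w, by simpa using hw, List.mem_of_mem_head? (by simp [hp])⟩⟩
      have h2 := Finset.card_le_card hsub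
      omega
    · exact second ∅ h
end

section
/- Suppose G is symmetric, i.e., (u,v) is an edge if and only if (v,u) is an edge, and suppose l ≥ n − 1 (so the length restriction on paths is vacuous). Then G satisfies Condition NC for parameters f and l if and only if n ≥ 3f+1 and the node-connectivity of G is at least 2f+1, i.e., for every S ⊆ V with |S| ≤ 2f the subgraph of G induced on V \ S is connected. -/
theorem aux_path {V : Type} (r : V → V → Prop) (Q : V → Prop) (x : V) (hx : Q x)
    (hr : ∀ a b, r a b → Q a) (w : V) (h : Relation.ReflTransGen r w x) :
    ∃ p : List V, p.IsChain r ∧ p.Nodup ∧ p.head? = some w ∧ p.getLast? = some x ∧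
      ∀ y ∈ p, Q y := by
  induction h using Relation.ReflTransGen.head_induction_on with
  | refl => exact ⟨[x], by simp, by simp, by simp, by simp, by simpa using hx⟩
  | @head a b hab _ ih =>
    obtain ⟨p, h1, h2, h3, h4, h5⟩ := ih
    by_cases ha : a ∈ p
    · obtain ⟨s, t, rfl⟩ := List.append_of_mem ha
      refine ⟨a :: t, (List.isChain_append.1 h1).2.1, (List.nodup_append.1 h2).2.1, rfl, ?_, ?_⟩
      · rw [← h4]; simp [List.getLast?_append, List.getLast?_cons]
      · intro y hy
        exact h5 y (by simp at hy ⊢; tauto)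
    · cases p with
      | nil => simp at h3
      | cons c t =>
        simp at h3
        subst h3
        refine ⟨a :: c :: t, List.isChain_cons_cons.2 ⟨hab, h1⟩, List.nodup_cons.2 ⟨ha, h2⟩, rfl, ?_, ?_⟩
        · rw [← h4]; simp [List.getLast?_cons]
        · intro y hy
          rcases List.mem_cons.1 hy with rfl | hy
          · exact hr _ _ hab
          · exact h5 y hy

theorem aux_inv {V : Type} (r : V → V → Prop) (P N : V → Prop) (x : V)
    (hstep : ∀ a b, P a → r a b → ¬ N b → P b) :
    ∀ (p : List V) (w : V), p.IsChain r → p.head? = some w → P w → p.getLast? = some x →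
      (∀ y ∈ p, ¬ N y) → P x := by
  intro p
  induction p with
  | nil => simp
  | cons a t ih =>
    intro w h1 h2 h3 h4 h5
    simp at h2
    subst h2
    cases t with
    | nil => simp at h4; exact h4 ▸ h3
    | cons b t =>
      obtain ⟨h6, h7⟩ := List.isChain_cons_cons.1 h1
      refine ih b h7 rfl (hstep a b h3 h6 (h5 b (by simp))) ?_ (fun y hy => h5 y (by simp at hy ⊢; tauto))
      rw [← h4]; simp [List.getLast?_cons]

/-- Sources of size at most `f` are themselves cuts. -/
theorem aux_small {V : Type} (E : V → V → Prop) (f l : ℕ) (A B : Finset V)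
    (hd : Disjoint A B) (hA : A.card ≤ f) : ¬ ArrowL E f l A B := by
  rintro ⟨i, hi, h⟩
  have := h A ⟨fun h' => Finset.disjoint_left.1 hd h' hi, ?_⟩
  · omega
  · rintro p ⟨_, _, ⟨w, hw, hp⟩, _⟩
    exact ⟨w, hw, List.mem_of_mem_head? hp⟩

/-- If no edge outside `F` leads from `R` to `L`, then `C` is a cut. -/
theorem aux_sep {V : Type} [DecidableEq V] (E : V → V → Prop) (f l : ℕ) (L C R F : Finset V)
    (hRL : Disjoint R L) (hCL : Disjoint C L) (hC : C.card ≤ f)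
    (hstep : ∀ a b, a ∈ R → E a b → b ∉ F → b ∉ C → b ∈ R) :
    ¬ ArrowL (inducedE E F) f l (R ∪ C) L := by
  rintro ⟨i, hi, h⟩
  have := h C ⟨fun h' => Finset.disjoint_left.1 hCL h' hi, ?_⟩
  · omega
  · rintro p ⟨h1, _, ⟨w, hw, hp⟩, h4, _⟩
    by_contra hcon
    push Not at hcon
    have hwC : w ∉ C := fun hc => hcon w hc (List.mem_of_mem_head? hp)
    have hwR : w ∈ R := by
      rcases Finset.mem_union.1 hw with h | h
      · exact h
      · exact absurd h hwC
    have := aux_inv (inducedE E F) (· ∈ R) (· ∈ C) i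
      (fun a b ha hab hb => hstep a b ha hab.2.2 hab.2.1 hb) p w h1 hp hwR h4
      (fun y hy hc => hcon y hc hy)
    exact Finset.disjoint_left.1 hRL this hi

theorem aux_arrow {V : Type} [Fintype V] [DecidableEq V] (E : V → V → Prop) (f l : ℕ)
    (hl' : Fintype.card V - 1 ≤ l)
    (hconn : ∀ S : Finset V, S.card ≤ 2 * f →
          ∀ u v : V, u ∉ S → v ∉ S →
            Relation.ReflTransGen (fun a b => a ∉ S ∧ b ∉ S ∧ a ≠ b ∧ E a b) u v)
    (A B F : Finset V) (hAF : Disjoint A F) (hBF : Disjoint B F)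
    (hF : F.card ≤ f) (hA : f + 1 ≤ A.card) (hB : B.Nonempty) :
    ArrowL (inducedE E F) f l A B := by
  obtain ⟨i, hi⟩ := hB
  refine ⟨i, hi, fun S hS => ?_⟩
  by_contra hlt
  obtain ⟨w, hw, hwS⟩ : ∃ w ∈ A, w ∉ S := Finset.exists_mem_notMem_of_card_lt_card (by omega)
  have hcard : (S ∪ F).card ≤ 2 * f := (Finset.card_union_le _ _).trans (by omega)
  have hwF := Finset.disjoint_left.1 hAF hw
  have hiF := Finset.disjoint_left.1 hBF hi
  have hi' : i ∉ S ∪ F := by simp [hS.1, hiF]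
  obtain ⟨p, h1, h2, h3, h4, h5⟩ := aux_path _ (· ∉ S ∪ F) i hi' (fun a b h => h.1) w
    (hconn (S ∪ F) hcard w i (by simp [hwS, hwF]) hi')
  have hlen := h2.length_le_card
  obtain ⟨s, hs, hsp⟩ := hS.2 p ⟨h1.imp (fun a b h => by
      simp only [Finset.mem_union, not_or] at h
      exact ⟨h.1.2, h.2.1.2, h.2.2.2⟩), h2, ⟨w, hw, h3⟩, h4, by omega⟩
  exact h5 s hsp (Finset.mem_union_left _ hs)

/-- For a symmetric graph `G` and `l ≥ n - 1`, Condition NC holds for parameters `f, l` iff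
`n ≥ 3f + 1` and the node-connectivity of `G` is at least `2f + 1` (for every `S` with
`|S| ≤ 2f`, the subgraph induced on `V \ S` — with self-loops ignored — is connected). -/
theorem stmt_8 {V : Type} [Fintype V] [DecidableEq V] (E : V → V → Prop)
    (hself : ∀ v, E v v) (hn : 2 ≤ Fintype.card V) (f l : ℕ) (hl : 1 ≤ l)
    (hsym : ∀ u v, E u v ↔ E v u) (hl' : Fintype.card V - 1 ≤ l) :
    CondNC E f l ↔
      (3 * f + 1 ≤ Fintype.card V ∧
        ∀ S : Finset V, S.card ≤ 2 * f →
          ∀ u v : V, u ∉ S → v ∉ S →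
            Relation.ReflTransGen (fun a b => a ∉ S ∧ b ∉ S ∧ a ≠ b ∧ E a b) u v) := by
  classical
  constructor
  · intro hNC
    constructor
    · by_contra hlt
      obtain ⟨L, -, hL⟩ := Finset.exists_subset_card_eq
        (s := (Finset.univ : Finset V)) (n := min f (Fintype.card V - 1)) (by rw [Finset.card_univ]; omega)
      have hLc : (Finset.univ \ L).card = Fintype.card V - L.card := by
        rw [Finset.card_sdiff_of_subset (Finset.subset_univ _), Finset.card_univ]
      obtain ⟨R, hRs, hR⟩ := Finset.exists_subset_card_eq
        (s := Finset.univ \ L) (n := min f (Fintype.card V - L.card)) (by rw [hLc]; omega)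
      have hFc : ((Finset.univ \ L) \ R).card = Fintype.card V - L.card - R.card := by
        rw [Finset.card_sdiff_of_subset hRs, hLc]
      have hLR : Disjoint L R := by
        rw [Finset.disjoint_left]; intro a ha hb; have := hRs hb; simp at this; exact this ha
      have hpart : IsPartition4 L ∅ R ((Finset.univ \ L) \ R) := by
        refine ⟨?_, by simp, hLR, ?_, by simp, by simp, ?_⟩
        · ext a; simp; tauto
        · rw [Finset.disjoint_left]; intro a ha; simp [ha]
        · rw [Finset.disjoint_left]; intro a ha; simp [ha]
      rcases hNC L ∅ R _ hpart (Finset.card_pos.1 (by omega)) (Finset.card_pos.1 (by omega))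
        (by omega) with h | h
      · exact aux_small _ f l _ _ (by simpa using hLR.symm) (by simp; omega) h
      · exact aux_small _ f l _ _ (by simpa using hLR) (by simp; omega) h
    · intro S hS u v hu hv
      by_contra hcon
      obtain ⟨F, hFS, hF⟩ := Finset.exists_subset_card_eq
        (s := S) (n := min f S.card) (by omega)
      have hC : (S \ F).card = S.card - F.card := Finset.card_sdiff_of_subset hFS
      let T : V → V → Prop := fun a b => a ∉ S ∧ b ∉ S ∧ a ≠ b ∧ E a b
      let L : Finset V := Finset.univ.filter (fun a => a ∉ S ∧ Relation.ReflTransGen T u a)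
      let R : Finset V := Finset.univ.filter (fun a => a ∉ S ∧ ¬ Relation.ReflTransGen T u a)
      have hLm : ∀ a, a ∈ L ↔ a ∉ S ∧ Relation.ReflTransGen T u a := by simp [L]
      have hRm : ∀ a, a ∈ R ↔ a ∉ S ∧ ¬ Relation.ReflTransGen T u a := by simp [R]
      have hLR : Disjoint L R := by
        rw [Finset.disjoint_left]; intro a; rw [hLm, hRm]; tauto
      have hLC : Disjoint L (S \ F) := by
        rw [Finset.disjoint_left]; intro a; rw [hLm, Finset.mem_sdiff]; tauto
      have hRC : Disjoint R (S \ F) := by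
        rw [Finset.disjoint_left]; intro a; rw [hRm, Finset.mem_sdiff]; tauto
      have hpart : IsPartition4 L (S \ F) R F := by
        refine ⟨?_, hLC, hLR, ?_, hRC.symm, Finset.sdiff_disjoint, ?_⟩
        · ext a
          simp only [Finset.mem_union, hLm, hRm, Finset.mem_sdiff, Finset.mem_univ]
          tauto
        · rw [Finset.disjoint_left]; intro a; rw [hLm]; intro h h'; exact h.1 (hFS h')
        · rw [Finset.disjoint_left]; intro a; rw [hRm]; intro h h'; exact h.1 (hFS h')
      have key : ∀ a b, a ∈ L → E a b → b ∉ S → b ∈ L := by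
        intro a b ha hab hb
        rw [hLm] at ha ⊢
        refine ⟨hb, ?_⟩
        by_cases hne : a = b
        · exact hne ▸ ha.2
        · exact ha.2.tail ⟨ha.1, hb, hne, hab⟩
      rcases hNC L (S \ F) R F hpart ⟨u, (hLm u).2 ⟨hu, .refl⟩⟩ ⟨v, (hRm v).2 ⟨hv, hcon⟩⟩
        (by omega) with h | h
      · refine aux_sep E f l L (S \ F) R F hLR.symm hLC.symm (by omega) ?_ h
        intro a b ha hab hbF hbC
        have hbS : b ∉ S := fun hb => hbC (Finset.mem_sdiff.2 ⟨hb, hbF⟩)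
        rw [hRm]
        refine ⟨hbS, fun hb => ?_⟩
        exact Finset.disjoint_left.1 hLR
          (key b a ((hLm b).2 ⟨hbS, hb⟩) ((hsym a b).1 hab) ((hRm a).1 ha).1) ha
      · refine aux_sep E f l R (S \ F) L F hLR hRC.symm (by omega) ?_ h
        intro a b ha hab hbF hbC
        exact key a b ha hab (fun hb => hbC (Finset.mem_sdiff.2 ⟨hb, hbF⟩))
  · rintro ⟨hcard, hconn⟩ L C R F ⟨hU, hLC, hLR, hLF, hCR, hCF, hRF⟩ hL hR hF
    have hsum : L.card + C.card + R.card + F.card = Fintype.card V := by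
      rw [← Finset.card_univ, ← hU, Finset.card_union_of_disjoint, Finset.card_union_of_disjoint,
        Finset.card_union_of_disjoint hLC]
      · simp [Finset.disjoint_union_left, hLR, hCR]
      · simp [Finset.disjoint_union_left, hLF, hCF, hRF]
    have h1 : (R ∪ C).card = R.card + C.card := Finset.card_union_of_disjoint hCR.symm
    have h2 : (L ∪ C).card = L.card + C.card := Finset.card_union_of_disjoint hLC
    by_cases h : f + 1 ≤ (R ∪ C).card
    · left
      exact aux_arrow E f l hl' hconn _ _ F (by simp [Finset.disjoint_union_left, hRF, hCF]) hLF hF h hL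
    · right
      exact aux_arrow E f l hl' hconn _ _ F (by simp [Finset.disjoint_union_left, hLF, hCF]) hRF hF
        (by omega) hR
end

section
/- If G satisfies Condition NC for parameters f and l (for any l ≥ 1), then G satisfies Condition 1 for parameter f. -/
/-- Condition 1 (for parameter `f`): for every partition `L, C, R, F` of the vertex set with
`L, R` nonempty and `|F| ≤ f`, either `L ∪ C` contains at least `f + 1` distinct in-neighbors
of `R`, or `R ∪ C` contains at least `f + 1` distinct in-neighbors of `L`. -/
def Cond1 {V : Type} [Fintype V] [DecidableEq V] (E : V → V → Prop) [DecidableRel E]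
    (f : ℕ) : Prop :=
  ∀ L C R F : Finset V, IsPartition4 L C R F → L.Nonempty → R.Nonempty → F.card ≤ f →
    f + 1 ≤ ((L ∪ C).filter (fun u => ∃ v ∈ R, E u v)).card ∨
    f + 1 ≤ ((R ∪ C).filter (fun u => ∃ v ∈ L, E u v)).card

theorem cross_edge_aux {V : Type} [DecidableEq V] (E : V → V → Prop) (F A B : Finset V)
    (hcov : ∀ v, v ∉ F → v ∈ A ∨ v ∈ B) (hAB : Disjoint A B) (x : V) (hx : x ∈ B) :
    ∀ (p : List V) (w : V), List.IsChain (inducedE E F) (w :: p) → w ∈ A →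
      (w :: p).getLast? = some x → ∃ u ∈ w :: p, u ∈ A ∧ ∃ v ∈ B, E u v := by
  intro p
  induction p with
  | nil =>
    intro w _ hw hl
    simp at hl
    subst hl
    exact absurd hx (Finset.disjoint_left.mp hAB hw)
  | cons a t ih =>
    intro w hc hw hl
    rw [List.isChain_cons_cons] at hc
    obtain ⟨⟨_, ha, hE⟩, hc⟩ := hc
    rcases hcov a ha with h | h
    · rw [List.getLast?_cons_cons] at hl
      obtain ⟨u, hu, h2⟩ := ih a hc h hl
      exact ⟨u, List.mem_cons_of_mem _ hu, h2⟩
    · exact ⟨w, by simp, hw, a, h, hE⟩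

theorem arrow_card_aux {V : Type} [DecidableEq V] (E : V → V → Prop) [DecidableRel E]
    (f l : ℕ) (F A B : Finset V)
    (hcov : ∀ v, v ∉ F → v ∈ A ∨ v ∈ B) (hAB : Disjoint A B)
    (h : ArrowL (inducedE E F) f l A B) :
    f + 1 ≤ (A.filter (fun u => ∃ v ∈ B, E u v)).card := by
  obtain ⟨i, hi, hS⟩ := h
  apply hS
  refine ⟨fun hm => Finset.disjoint_left.mp hAB (Finset.mem_filter.mp hm).1 hi, ?_⟩
  rintro p ⟨hc, _, ⟨w, hw, hh⟩, hl, _⟩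
  cases p with
  | nil => simp at hh
  | cons a t =>
    simp at hh
    subst hh
    obtain ⟨u, hu, huA, hv⟩ := cross_edge_aux E F A B hcov hAB i hi t a hc hw hl
    exact ⟨u, Finset.mem_filter.mpr ⟨huA, hv⟩, hu⟩

/-- If `G` satisfies Condition NC for parameters `f` and `l` (any `l ≥ 1`), then `G`
satisfies Condition 1 for parameter `f`. -/
theorem stmt_11 {V : Type} [Fintype V] [DecidableEq V] (E : V → V → Prop) [DecidableRel E]
    (hself : ∀ v, E v v) (hn : 2 ≤ Fintype.card V) (f l : ℕ) (hl : 1 ≤ l)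
    (hNC : CondNC E f l) :
    Cond1 E f := by
  intro L C R F hP hL hR hF
  have hP' := hP
  obtain ⟨hU, hLC, hLR, _, hCR, _, _⟩ := hP'
  have hm : ∀ v, v ∈ L ∪ C ∪ R ∪ F := fun v => hU ▸ Finset.mem_univ v
  simp only [Finset.mem_union] at hm
  rcases hNC L C R F hP hL hR hF with h | h
  · right
    refine arrow_card_aux E f l F _ _ ?_ ?_ h
    · intro v hv
      have := hm v
      simp only [Finset.mem_union]
      tauto
    · exact Finset.disjoint_union_left.mpr ⟨hLR.symm, hLC.symm⟩
  · left
    refine arrow_card_aux E f l F _ _ ?_ ?_ h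
    · intro v hv
      have := hm v
      simp only [Finset.mem_union]
      tauto
    · exact Finset.disjoint_union_left.mpr ⟨hLR, hCR⟩
end

section
/- Let N ≥ 1 and τ ≥ 1 be integers, and let A_1, …, A_τ be N×N real matrices with nonnegative entries such that each A_j has all diagonal entries positive, and such that for each j the matrix power A_j^N has some column with all entries positive. Then for every sequence H_1, …, H_{τN} of matrices with each H_t ∈ {A_1, …, A_τ}, the product H_1 H_2 ⋯ H_{τN} has some column with all entries positive. -/
lemma prod_nonneg_aux {N τ : ℕ} (A : Fin τ → Matrix (Fin N) (Fin N) ℝ)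
    (hnn : ∀ j r c, 0 ≤ A j r c) (L : List (Fin τ)) :
    ∀ r c, 0 ≤ (L.map A).prod r c := by
  induction L with
  | nil =>
    intro r c
    simp only [List.map_nil, List.prod_nil, Matrix.one_apply]
    split_ifs <;> norm_num
  | cons a L ih =>
    intro r c
    simp only [List.map_cons, List.prod_cons, Matrix.mul_apply]
    exact Finset.sum_nonneg fun i _ => mul_nonneg (hnn _ _ _) (ih _ _)

lemma sublist_pos_aux {N τ : ℕ} (A : Fin τ → Matrix (Fin N) (Fin N) ℝ)
    (hnn : ∀ j r c, 0 ≤ A j r c) (hdiag : ∀ j r, 0 < A j r r)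
    (l L : List (Fin τ)) (h : l.Sublist L) :
    ∀ r c, 0 < (l.map A).prod r c → 0 < (L.map A).prod r c := by
  induction h with
  | slnil => exact fun _ _ h => h
  | @cons l L a _ ih =>
    intro r c hp
    simp only [List.map_cons, List.prod_cons, Matrix.mul_apply]
    exact Finset.sum_pos' (fun i _ => mul_nonneg (hnn _ _ _) (prod_nonneg_aux A hnn L _ _))
      ⟨r, Finset.mem_univ _, mul_pos (hdiag _ _) (ih _ _ hp)⟩
  | @cons_cons l L a _ ih =>
    intro r c hp
    simp only [List.map_cons, List.prod_cons, Matrix.mul_apply] at hp ⊢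
    obtain ⟨i, -, hi⟩ := Finset.exists_lt_of_sum_lt
      (s := Finset.univ) (f := fun _ : Fin N => (0 : ℝ)) (by simpa using hp)
    have h1 : 0 < A a r i := lt_of_le_of_ne (hnn _ _ _) fun h => by simp [← h] at hi
    have h2 : 0 < (l.map A).prod i c := pos_of_mul_pos_right hi h1.le
    exact Finset.sum_pos' (fun i _ => mul_nonneg (hnn _ _ _) (prod_nonneg_aux A hnn L _ _))
      ⟨i, Finset.mem_univ _, mul_pos h1 (ih _ _ h2)⟩

/-- Let `A_1, …, A_τ` be `N × N` nonnegative matrices with positive diagonals such that each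
`A_j ^ N` has an all-positive column. Then any product of `τN` matrices, each drawn from
`{A_1, …, A_τ}`, has an all-positive column. -/
theorem stmt_13 (N τ : ℕ) (hN : 1 ≤ N) (hτ : 1 ≤ τ)
    (A : Fin τ → Matrix (Fin N) (Fin N) ℝ)
    (hnn : ∀ j r c, 0 ≤ A j r c)
    (hdiag : ∀ j r, 0 < A j r r)
    (hcol : ∀ j, ∃ c, ∀ r, 0 < (A j ^ N) r c)
    (H : Fin (τ * N) → Matrix (Fin N) (Fin N) ℝ)
    (hH : ∀ t, ∃ j, H t = A j) :
    ∃ c, ∀ r, 0 < (List.ofFn H).prod r c := by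
  choose f hf using hH
  have hL : List.ofFn H = (List.ofFn f).map A := by
    rw [List.map_ofFn]
    congr 1
    funext t
    exact hf t
  have hj : ∃ j, N ≤ (List.ofFn f).count j := by
    by_contra! hlt
    have hs : ∑ j : Fin τ, (List.ofFn f).count j = τ * N := by
      have := Multiset.sum_count_eq_card (s := Finset.univ) (m := (List.ofFn f : Multiset (Fin τ)))
        (fun a _ => Finset.mem_univ a)
      simpa using this
    have : ∑ j : Fin τ, (List.ofFn f).count j < ∑ j : Fin τ, N :=
      Finset.sum_lt_sum_of_nonempty ⟨⟨0, hτ⟩, Finset.mem_univ _⟩ fun j _ => hlt j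
    simp [hs] at this
  obtain ⟨j, hj⟩ := hj
  obtain ⟨c, hc⟩ := hcol j
  refine ⟨c, fun r => ?_⟩
  rw [hL]
  refine sublist_pos_aux A hnn hdiag _ _ (List.replicate_sublist_iff.2 hj) r c ?_
  simpa using hc r
end

section
/- Let N ≥ 1 and τ ≥ 1 be integers and 0 < β ≤ 1. Let A_1, …, A_τ be N×N matrices whose entries are all 0 or 1, each with all diagonal entries equal to 1, and such that for each j the matrix power A_j^N has some column with all entries positive. Let M_1, …, M_{τN} be N×N row-stochastic matrices such that for every t there exists j(t) with M_t ≥ β·A_{j(t)} entrywise. Then the product Q = M_1 M_2 ⋯ M_{τN} is a row-stochastic scrambling matrix with λ(Q) ≤ 1 − β^{τN} < 1. -/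
/-- An `N × N` real matrix is row stochastic if its entries are nonnegative and each of its
rows sums to 1. -/
def RowStochastic {N : ℕ} (Q : Matrix (Fin N) (Fin N) ℝ) : Prop :=
  (∀ r c, 0 ≤ Q r c) ∧ ∀ r, ∑ c, Q r c = 1

/-- The coefficient of ergodicity `λ(Q) = 1 - min_{i₁,i₂} ∑_j min (Q i₁ j) (Q i₂ j)`. -/
noncomputable def ergLam {N : ℕ} (Q : Matrix (Fin N) (Fin N) ℝ) : ℝ :=
  1 - ⨅ p : Fin N × Fin N, ∑ j, min (Q p.1 j) (Q p.2 j)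

/-- Entrywise monotonicity of the product of nonnegative matrices. -/
lemma aux_mul_le {N : ℕ} {X X' Y Y' : Matrix (Fin N) (Fin N) ℝ}
    (hX : ∀ r c, 0 ≤ X r c) (hY : ∀ r c, 0 ≤ Y r c)
    (h1 : ∀ r c, X r c ≤ X' r c) (h2 : ∀ r c, Y r c ≤ Y' r c) (r c : Fin N) :
    (X * Y) r c ≤ (X' * Y') r c := by
  rw [Matrix.mul_apply, Matrix.mul_apply]
  exact Finset.sum_le_sum fun k _ =>
    mul_le_mul (h1 r k) (h2 k c) (hY k c) ((hX r k).trans (h1 r k))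

lemma aux_mul_nonneg {N : ℕ} {X Y : Matrix (Fin N) (Fin N) ℝ}
    (hX : ∀ r c, 0 ≤ X r c) (hY : ∀ r c, 0 ≤ Y r c) (r c : Fin N) : 0 ≤ (X * Y) r c := by
  rw [Matrix.mul_apply]
  exact Finset.sum_nonneg fun k _ => mul_nonneg (hX r k) (hY k c)

lemma aux_one_nonneg {N : ℕ} (r c : Fin N) : 0 ≤ (1 : Matrix (Fin N) (Fin N) ℝ) r c := by
  rw [Matrix.one_apply]; split_ifs <;> norm_num

lemma aux_pow_nonneg {N : ℕ} {X : Matrix (Fin N) (Fin N) ℝ}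
    (hX : ∀ r c, 0 ≤ X r c) (k : ℕ) : ∀ r c, 0 ≤ (X ^ k) r c := by
  induction k with
  | zero => intro r c; rw [pow_zero]; exact aux_one_nonneg r c
  | succ k ih => intro r c; rw [pow_succ]; exact aux_mul_nonneg ih hX r c

lemma aux_pow_mono {N : ℕ} {X : Matrix (Fin N) (Fin N) ℝ}
    (hX : ∀ r c, 0 ≤ X r c) (h1 : ∀ r c, (1 : Matrix (Fin N) (Fin N) ℝ) r c ≤ X r c)
    {k l : ℕ} (hkl : k ≤ l) : ∀ r c, (X ^ k) r c ≤ (X ^ l) r c := by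
  induction l, hkl using Nat.le_induction with
  | base => intro r c; exact le_rfl
  | succ l _ ih =>
    intro r c
    have := aux_mul_le (aux_pow_nonneg hX k) aux_one_nonneg ih h1 r c
    rwa [mul_one, ← pow_succ] at this

lemma aux_rs_mul {N : ℕ} {X Y : Matrix (Fin N) (Fin N) ℝ}
    (hX : RowStochastic X) (hY : RowStochastic Y) : RowStochastic (X * Y) := by
  refine ⟨aux_mul_nonneg hX.1 hY.1, fun r => ?_⟩
  simp only [Matrix.mul_apply]
  rw [Finset.sum_comm]
  simp only [← Finset.mul_sum, hY.2, mul_one, hX.2]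

lemma aux_rs_prod {N : ℕ} (l : List (Matrix (Fin N) (Fin N) ℝ))
    (h : ∀ X ∈ l, RowStochastic X) : RowStochastic l.prod := by
  induction l with
  | nil =>
    refine ⟨fun r c => ?_, fun r => ?_⟩
    · rw [List.prod_nil]; exact aux_one_nonneg r c
    · simp [Matrix.one_apply]
  | cons X l ih =>
    rw [List.prod_cons]
    exact aux_rs_mul (h X (by simp)) (ih fun Y hY => h Y (by simp [hY]))

/-- The product dominates a scaled power counting the occurrences of one index. -/
lemma aux_prod_ge {N n : ℕ} (M : Fin n → Matrix (Fin N) (Fin N) ℝ)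
    (B : Matrix (Fin N) (Fin N) ℝ) (β : ℝ) (hβ : 0 < β) (hB : ∀ r c, 0 ≤ B r c)
    (p : Fin n → Bool)
    (h1 : ∀ t r c, β * (1 : Matrix (Fin N) (Fin N) ℝ) r c ≤ M t r c)
    (h2 : ∀ t, p t = true → ∀ r c, β * B r c ≤ M t r c) (l : List (Fin n)) :
    ∀ r c, β ^ l.length * (B ^ l.countP p) r c ≤ (l.map M).prod r c := by
  induction l with
  | nil => intro r c; simp
  | cons t l ih =>
    intro r c
    have hpow := aux_pow_nonneg hB (l.countP p)
    have hn : ∀ r c, 0 ≤ (β ^ l.length • B ^ l.countP p) r c := fun r c =>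
      mul_nonneg (by positivity) (hpow r c)
    rw [List.map_cons, List.prod_cons, List.length_cons]
    by_cases hp : p t = true
    · have := aux_mul_le (X := β • B) (Y := β ^ l.length • B ^ l.countP p)
        (fun r c => mul_nonneg hβ.le (hB r c)) hn (h2 t hp) ih r c
      rw [List.countP_cons_of_pos hp]
      refine le_trans (le_of_eq ?_) this
      rw [smul_mul_smul_comm, Matrix.smul_apply, smul_eq_mul, ← pow_succ', ← pow_succ']
    · have := aux_mul_le (X := β • (1 : Matrix (Fin N) (Fin N) ℝ))
        (Y := β ^ l.length • B ^ l.countP p)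
        (fun r c => mul_nonneg hβ.le (aux_one_nonneg r c)) hn (h1 t) ih r c
      rw [List.countP_cons_of_neg hp]
      refine le_trans (le_of_eq ?_) this
      rw [smul_mul_smul_comm, Matrix.smul_apply, smul_eq_mul, ← pow_succ', one_mul]

lemma aux_pow_nat {N : ℕ} (B : Matrix (Fin N) (Fin N) ℝ)
    (hB : ∀ r c, B r c = 0 ∨ B r c = 1) (k : ℕ) : ∀ r c, ∃ m : ℕ, (B ^ k) r c = m := by
  have hB' : ∀ r c, ∃ m : ℕ, B r c = m := fun r c => by
    rcases hB r c with h | h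
    · exact ⟨0, by simp [h]⟩
    · exact ⟨1, by simp [h]⟩
  induction k with
  | zero =>
    intro r c
    rw [pow_zero, Matrix.one_apply]
    split_ifs
    · exact ⟨1, by simp⟩
    · exact ⟨0, by simp⟩
  | succ k ih =>
    intro r c
    choose f hf using ih
    choose g hg using hB'
    refine ⟨∑ i, f r i * g i c, ?_⟩
    rw [pow_succ, Matrix.mul_apply]
    push_cast
    simp only [hf, hg]

/-- Let `A_1, …, A_τ` be 0–1 matrices with unit diagonals such that each `A_j ^ N` has an
all-positive column, and let `M_1, …, M_{τN}` be row-stochastic matrices with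
`M_t ≥ β • A_{j(t)}` entrywise for some `j(t)`. Then `Q = M_1 ⋯ M_{τN}` is a row-stochastic
scrambling matrix with `λ(Q) ≤ 1 - β^{τN} < 1`. -/
theorem stmt_14 (N τ : ℕ) (hN : 1 ≤ N) (hτ : 1 ≤ τ)
    (β : ℝ) (hβ0 : 0 < β) (hβ1 : β ≤ 1)
    (A : Fin τ → Matrix (Fin N) (Fin N) ℝ)
    (hA01 : ∀ j r c, A j r c = 0 ∨ A j r c = 1)
    (hdiag : ∀ j r, A j r r = 1)
    (hcol : ∀ j, ∃ c, ∀ r, 0 < (A j ^ N) r c)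
    (M : Fin (τ * N) → Matrix (Fin N) (Fin N) ℝ)
    (hMrs : ∀ t, RowStochastic (M t))
    (hMA : ∀ t, ∃ j, ∀ r c, β * A j r c ≤ M t r c) :
    RowStochastic (List.ofFn M).prod ∧
      ergLam (List.ofFn M).prod ≤ 1 - β ^ (τ * N) ∧
      (1 : ℝ) - β ^ (τ * N) < 1 := by
  have hrs : RowStochastic (List.ofFn M).prod := by
    apply aux_rs_prod
    intro X hX
    rw [List.mem_ofFn] at hX
    obtain ⟨t, rfl⟩ := hX
    exact hMrs t
  have hpos : 0 < β ^ (τ * N) := by positivity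
  refine ⟨hrs, ?_, by linarith⟩
  have hA0 : ∀ j r c, 0 ≤ A j r c := fun j r c => by
    rcases hA01 j r c with h | h <;> simp [h]
  have hA1 : ∀ j r c, (1 : Matrix (Fin N) (Fin N) ℝ) r c ≤ A j r c := fun j r c => by
    rw [Matrix.one_apply]
    split_ifs with h
    · subst h; rw [hdiag]
    · exact hA0 j r c
  choose j hj using hMA
  haveI : Nonempty (Fin τ) := ⟨⟨0, hτ⟩⟩
  haveI : Nonempty (Fin N) := ⟨⟨0, hN⟩⟩
  obtain ⟨j0, hj0⟩ := Fintype.exists_le_card_fiber_of_mul_le_card (n := N) j (by simp)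
  have hcount : N ≤ (List.finRange (τ * N)).countP (fun t => decide (j t = j0)) := by
    rw [List.countP_eq_length_filter]
    exact hj0
  obtain ⟨c, hc⟩ := hcol j0
  have key : ∀ r, β ^ (τ * N) ≤ (List.ofFn M).prod r c := by
    intro r
    have h := aux_prod_ge M (A j0) β hβ0 (hA0 j0) (fun t => decide (j t = j0))
      (fun t r c => (mul_le_mul_of_nonneg_left (hA1 (j t) r c) hβ0.le).trans (hj t r c))
      (fun t ht r c => by
        have : j t = j0 := by simpa using ht
        rw [← this]; exact hj t r c) (List.finRange (τ * N)) r c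
    rw [List.length_finRange, ← List.ofFn_eq_map] at h
    refine le_trans ?_ h
    have h1 : 1 ≤ (A j0 ^ N) r c := by
      obtain ⟨m, hm⟩ := aux_pow_nat (A j0) (hA01 j0) N r c
      have := hc r
      rw [hm] at this ⊢
      exact_mod_cast this
    exact le_mul_of_one_le_right hpos.le
      (h1.trans (aux_pow_mono (hA0 j0) (hA1 j0) hcount r c))
  unfold ergLam
  have : β ^ (τ * N) ≤ ⨅ p : Fin N × Fin N,
      ∑ j, min ((List.ofFn M).prod p.1 j) ((List.ofFn M).prod p.2 j) := by
    apply le_ciInf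
    intro p
    refine (le_min (key p.1) (key p.2)).trans ?_
    exact Finset.single_le_sum
      (f := fun j => min ((List.ofFn M).prod p.1 j) ((List.ofFn M).prod p.2 j))
      (fun i _ => le_min (hrs.1 _ _) (hrs.1 _ _)) (Finset.mem_univ c)
  linarith
end

section
/- Let (M_t)_{t≥1} be a sequence of N×N row-stochastic matrices and suppose there exist γ with 0 < γ ≤ 1 and an integer L ≥ 1 such that for every k ≥ 0 the block product P_k = M_{(k+1)L} M_{(k+1)L−1} ⋯ M_{kL+1} satisfies λ(P_k) ≤ 1 − γ. Then δ(M_T M_{T−1} ⋯ M_1) → 0 as T → ∞. -/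
/-- `δ(Q) = max_j max_{i₁,i₂} |Q i₁ j - Q i₂ j|`. -/
noncomputable def ergDel {N : ℕ} (Q : Matrix (Fin N) (Fin N) ℝ) : ℝ :=
  ⨆ p : (Fin N × Fin N) × Fin N, |Q p.1.1 p.2 - Q p.1.2 p.2|

/-- The backward product `M_T * M_{T-1} * ⋯ * M_1` (and the identity for `T = 0`). -/
noncomputable def backProd {N : ℕ} (M : ℕ → Matrix (Fin N) (Fin N) ℝ) :
    ℕ → Matrix (Fin N) (Fin N) ℝ
  | 0 => 1
  | T + 1 => M (T + 1) * backProd M T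

/-- The block product `P_k = M_{(k+1)L} * M_{(k+1)L - 1} * ⋯ * M_{kL+1}`. -/
noncomputable def blockProd {N : ℕ} (M : ℕ → Matrix (Fin N) (Fin N) ℝ) (L k : ℕ) :
    Matrix (Fin N) (Fin N) ℝ :=
  ((List.range L).map fun s => M ((k + 1) * L - s)).prod

def Spread {N : ℕ} (X : Matrix (Fin N) (Fin N) ℝ) (d : ℝ) : Prop :=
  ∀ a b j, X a j - X b j ≤ d

lemma spread_mul {N : ℕ} {Q X : Matrix (Fin N) (Fin N) ℝ} {g d : ℝ} (hQ : RowStochastic Q)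
    (hg : ∀ a b, g ≤ ∑ j, min (Q a j) (Q b j)) (hd : 0 ≤ d) (hX : Spread X d) :
    Spread (Q * X) ((1 - g) * d) := by
  intro a b c
  haveI : Nonempty (Fin N) := ⟨a⟩
  obtain ⟨i₀, h₀⟩ := Finite.exists_min (fun i => X i c)
  have h1 : (Q * X) a c - X i₀ c = ∑ j, Q a j * (X j c - X i₀ c) := by
    simp only [mul_sub, Finset.sum_sub_distrib, ← Finset.sum_mul, hQ.2 a, one_mul, Matrix.mul_apply]
  have h2 : (Q * X) b c - X i₀ c = ∑ j, Q b j * (X j c - X i₀ c) := by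
    simp only [mul_sub, Finset.sum_sub_distrib, ← Finset.sum_mul, hQ.2 b, one_mul, Matrix.mul_apply]
  have h3 : ∑ j, Q a j * (X j c - X i₀ c) - ∑ j, Q b j * (X j c - X i₀ c)
      ≤ ∑ j, (Q a j - min (Q a j) (Q b j)) * d := by
    rw [← Finset.sum_sub_distrib]
    apply Finset.sum_le_sum
    intro j _
    have e1 : 0 ≤ X j c - X i₀ c := sub_nonneg.2 (h₀ j)
    have e2 := hX j i₀ c
    have e3 := min_le_left (Q a j) (Q b j)
    have e4 := min_le_right (Q a j) (Q b j)
    have e5 := mul_le_mul_of_nonneg_left e2 (sub_nonneg.2 e3)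
    have e6 := mul_nonneg (sub_nonneg.2 e4) e1
    nlinarith
  rw [← Finset.sum_mul, Finset.sum_sub_distrib, hQ.2 a] at h3
  have h4 := mul_le_mul_of_nonneg_right (sub_le_sub_left (hg a b) 1) hd
  linarith

lemma rs_one {N : ℕ} : RowStochastic (1 : Matrix (Fin N) (Fin N) ℝ) := by
  refine ⟨fun r c => ?_, fun r => ?_⟩
  · rw [Matrix.one_apply]; split_ifs <;> norm_num
  · simp [Matrix.one_apply]

lemma rs_mul {N : ℕ} {A B : Matrix (Fin N) (Fin N) ℝ} (hA : RowStochastic A)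
    (hB : RowStochastic B) : RowStochastic (A * B) := by
  refine ⟨fun r c => ?_, fun r => ?_⟩
  · rw [Matrix.mul_apply]
    exact Finset.sum_nonneg fun j _ => mul_nonneg (hA.1 _ _) (hB.1 _ _)
  · simp only [Matrix.mul_apply]
    rw [Finset.sum_comm]
    simp only [← Finset.mul_sum, hB.2, mul_one, hA.2]

lemma rs_prod {N : ℕ} (l : List (Matrix (Fin N) (Fin N) ℝ)) (h : ∀ A ∈ l, RowStochastic A) :
    RowStochastic l.prod := by
  induction l with
  | nil => simpa using rs_one
  | cons A l ih =>
    rw [List.prod_cons]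
    exact rs_mul (h A (by simp)) (ih fun B hB => h B (by simp [hB]))

lemma back_split {N : ℕ} (M : ℕ → Matrix (Fin N) (Fin N) ℝ) (n m : ℕ) (hm : m ≤ n) :
    backProd M n = ((List.range m).map fun s => M (n - s)).prod * backProd M (n - m) := by
  induction m with
  | zero => simp
  | succ m ih =>
    rw [ih (by omega), List.range_succ, List.map_append, List.prod_append]
    obtain ⟨p, hp⟩ : ∃ p, n - m = p + 1 := ⟨n - m - 1, by omega⟩
    have hp2 : n - (m + 1) = p := by omega
    simp [hp, hp2, backProd, mul_assoc]

/-- If `(M_t)_{t ≥ 1}` are row-stochastic and there are `0 < γ ≤ 1` and `L ≥ 1` such that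
every block product `P_k = M_{(k+1)L} ⋯ M_{kL+1}` satisfies `λ(P_k) ≤ 1 - γ`, then
`δ(M_T M_{T-1} ⋯ M_1) → 0` as `T → ∞`. -/
theorem stmt_15 (N : ℕ) (M : ℕ → Matrix (Fin N) (Fin N) ℝ)
    (hM : ∀ t, 1 ≤ t → RowStochastic (M t))
    (γ : ℝ) (hγ0 : 0 < γ) (hγ1 : γ ≤ 1) (L : ℕ) (hL : 1 ≤ L)
    (hblock : ∀ k : ℕ, ergLam (blockProd M L k) ≤ 1 - γ) :
    Filter.Tendsto (fun T => ergDel (backProd M T)) Filter.atTop (nhds 0) := by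
  have hstep : ∀ k, Spread (backProd M (k * L)) ((1 - γ) ^ k) := by
    intro k
    induction k with
    | zero =>
      intro a b j
      have h1 : (1 : Matrix (Fin N) (Fin N) ℝ) a j ≤ 1 := by
        rw [Matrix.one_apply]; split_ifs <;> norm_num
      have h2 := (rs_one (N := N)).1 b j
      simp only [zero_mul, backProd, pow_zero]
      linarith
    | succ k ih =>
      have e : (k + 1) * L - L = k * L := by rw [add_mul, one_mul, Nat.add_sub_cancel]
      have hle : L ≤ (k + 1) * L := Nat.le_mul_of_pos_left L (Nat.succ_pos k)
      rw [back_split M ((k + 1) * L) L hle, e, pow_succ']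
      refine spread_mul (rs_prod _ ?_) ?_ (pow_nonneg (by linarith) k) ih
      · intro A hA
        simp only [List.mem_map, List.mem_range] at hA
        obtain ⟨s, hs, rfl⟩ := hA
        exact hM _ (by omega)
      · intro a b
        have h1 := hblock k
        unfold ergLam at h1
        have h2 := ciInf_le (f := fun p : Fin N × Fin N =>
          ∑ j, min (blockProd M L k p.1 j) (blockProd M L k p.2 j))
          (Set.finite_range _).bddBelow (a, b)
        have h3 : γ ≤ ∑ j, min (blockProd M L k a j) (blockProd M L k b j) := by
          dsimp only at h2
          linarith
        exact h3
  have hall : ∀ k T, k * L ≤ T → Spread (backProd M T) ((1 - γ) ^ k) := by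
    intro k T hT
    induction T, hT using Nat.le_induction with
    | base => exact hstep k
    | succ T _ ih =>
      have hs := hM (T + 1) (by omega)
      have h := spread_mul (g := 0) hs
        (fun a b => Finset.sum_nonneg fun j _ => le_min (hs.1 a j) (hs.1 b j))
        (pow_nonneg (by linarith) k) ih
      simpa [backProd] using h
  have hlim : Filter.Tendsto (fun T : ℕ => (1 - γ) ^ (T / L)) Filter.atTop (nhds 0) :=
    (tendsto_pow_atTop_nhds_zero_of_lt_one (by linarith) (by linarith)).comp
      (Nat.tendsto_div_const_atTop (by omega))
  refine squeeze_zero (fun T => Real.iSup_nonneg fun _ => abs_nonneg _) (fun T => ?_) hlim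
  refine Real.iSup_le (fun p => ?_) (pow_nonneg (by linarith) _)
  have h := hall (T / L) T (Nat.div_mul_le_self T L)
  rw [abs_sub_le_iff]
  exact ⟨h _ _ _, h _ _ _⟩
end

section
/- Suppose that for every partition of V into three disjoint sets A, B, F with A ≠ ∅, B ≠ ∅ and |F| ≤ f, either A propagates in V−F to B or B propagates in V−F to A. Then G satisfies Condition NC for parameters f and l for every l ≥ n − 1 (for which the length restriction on paths is vacuous). -/
/-- `A` propagates in `V - F` to `B`: either `B = ∅`, or for every `b ∈ B` there are at
least `f + 1` directed paths in `G` from vertices of `A` to `b` avoiding all vertices of `F`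
and pairwise vertex-disjoint except possibly at `b`. -/
def Propagates {V : Type} (E : V → V → Prop) (f : ℕ) (F A B : Finset V) : Prop :=
  B = ∅ ∨ ∀ b ∈ B, ∃ P : Fin (f + 1) → List V,
    (∀ j, (P j).Chain' E ∧ (P j).Nodup ∧ (∃ a ∈ A, (P j).head? = some a) ∧
      (P j).getLast? = some b ∧ ∀ v ∈ P j, v ∉ F) ∧
    ∀ j j', j ≠ j' → ∀ v, v ∈ P j → v ∈ P j' → v = b

/-- `A, B, F` form a partition of the vertex set into three pairwise disjoint sets. -/
def IsPartition3 {V : Type} [Fintype V] [DecidableEq V] (A B F : Finset V) : Prop :=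
  A ∪ B ∪ F = Finset.univ ∧ Disjoint A B ∧ Disjoint A F ∧ Disjoint B F

theorem chain_induced_aux {V : Type} (E : V → V → Prop) (F : Finset V) (p : List V)
    (hc : p.Chain' E) (hF : ∀ v ∈ p, v ∉ F) : p.Chain' (inducedE E F) := by
  induction p with
  | nil => exact List.isChain_nil
  | cons a t ih =>
    cases t with
    | nil => exact List.isChain_singleton a
    | cons b t =>
      have hc' := List.isChain_cons_cons.1 hc
      refine List.isChain_cons_cons.2 ⟨⟨hF a (by simp), hF b (by simp), hc'.1⟩, ?_⟩
      exact ih hc'.2 (fun v hv => hF v (List.mem_cons_of_mem _ hv))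

theorem cut_card_aux {V : Type} [Fintype V] [DecidableEq V] (E : V → V → Prop)
    (f l : ℕ) (hl : Fintype.card V - 1 ≤ l) (F A A' B : Finset V) (hA : A ⊆ A')
    (h : Propagates E f F A B) (b : V) (hb : b ∈ B) (S : Finset V)
    (hS : IsCut (inducedE E F) l A' b S) : f + 1 ≤ S.card := by
  rcases h with h | h
  · simp [h] at hb
  obtain ⟨P, hP, hd⟩ := h b hb
  have key : ∀ j, ∃ s ∈ S, s ∈ P j := by
    intro j
    obtain ⟨h1, h2, ⟨a, ha, h3⟩, h4, h5⟩ := hP j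
    refine hS.2 (P j) ⟨chain_induced_aux E F _ h1 h5, h2, ⟨a, hA ha, h3⟩, h4, ?_⟩
    have := h2.length_le_card
    omega
  choose s hs hsP using key
  have hinj : Function.Injective s := by
    intro j j' hjj
    by_contra hne
    have := hd j j' hne (s j) (hsP j) (hjj ▸ hsP j')
    exact hS.1 (this ▸ hs j)
  have := Finset.card_le_card_of_injOn (s := Finset.univ) (t := S) s
    (fun j _ => hs j) hinj.injOn
  simpa using this

/-- If for every partition `A, B, F` of `V` with `A, B` nonempty and `|F| ≤ f` either `A`
propagates in `V - F` to `B` or `B` propagates in `V - F` to `A`, then `G` satisfies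
Condition NC for parameters `f` and `l` for every `l ≥ n - 1`. -/
theorem stmt_17 {V : Type} [Fintype V] [DecidableEq V] (E : V → V → Prop)
    (hself : ∀ v, E v v) (hn : 2 ≤ Fintype.card V) (f : ℕ)
    (hprop : ∀ A B F : Finset V, IsPartition3 A B F → A.Nonempty → B.Nonempty →
      F.card ≤ f → Propagates E f F A B ∨ Propagates E f F B A) :
    ∀ l : ℕ, Fintype.card V - 1 ≤ l → CondNC E f l := by
  intro l hl L C R F hpart hL hR hF
  obtain ⟨hu, hLC, hLR, hLF, hCR, hCF, hRF⟩ := hpart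
  have h3 : IsPartition3 (L ∪ C) R F :=
    ⟨hu, Finset.disjoint_union_left.2 ⟨hLR, hCR⟩,
      Finset.disjoint_union_left.2 ⟨hLF, hCF⟩, hRF⟩
  rcases hprop _ _ _ h3 (hL.mono Finset.subset_union_left) hR hF with h | h
  · right
    obtain ⟨b, hb⟩ := hR
    exact ⟨b, hb, fun S hS => cut_card_aux E f l hl F _ _ R (Finset.Subset.refl _) h b hb S hS⟩
  · left
    obtain ⟨b, hb⟩ := hL
    exact ⟨b, hb, fun S hS => cut_card_aux E f l hl F _ _ (L ∪ C)
      Finset.subset_union_left h b (Finset.mem_union_left _ hb) S hS⟩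
end
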